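/- Suppose k_min > 0. Then every global classical solution of the Q-system (i.e., classical solution on [0,∞)) is stationary: if (Q,N) is a classical solution of the Q-system on [0,∞), then Q(τ,·) = Q(0,·) for all τ ≥ 0. Consequently, every classical solution whose initial datum is not the profile of a steady state has finite maximal existence time. -/

import Mathlib

open Real Set MeasureTheory Filter Topology
open scoped ENNReal

noncomputable section

/-- The time interval `[0, T)` in `ℝ`, where `T : ℝ≥0∞` may be `∞`. -/
def Ico0 (T : ℝ≥0∞) : Set ℝ := {τ : ℝ | 0 ≤ τ ∧ ENNReal.ofReal τ < T}

/-- Partial derivative in the time variable (one-sided at `τ = 0`). -/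
def pdTau (Q : ℝ → ℝ → ℝ) (τ η : ℝ) : ℝ := derivWithin (fun s => Q s η) (Ici 0) τ

/-- Partial derivative in the spatial variable (one-sided at `η = 0` and `η = 1`). -/
def pdEta (Q : ℝ → ℝ → ℝ) (τ η : ℝ) : ℝ := derivWithin (fun x => Q τ x) (Icc 0 1) η

/-- Assumption 1.1: `K ∈ C²(ℝ)` with `K'`, `K''` bounded on `ℝ` and `K > 0` on `[0, Φ_F]`. -/
structure KAssump (K : ℝ → ℝ) (ΦF : ℝ) : Prop where
  smooth : ContDiff ℝ 2 K
  bdd1 : ∃ C : ℝ, ∀ x : ℝ, |deriv K x| ≤ C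
  bdd2 : ∃ C : ℝ, ∀ x : ℝ, |deriv (deriv K) x| ≤ C
  pos : ∀ φ ∈ Icc (0 : ℝ) ΦF, 0 < K φ

/-- `k_min := K'(0) + ∫₀^{Φ_F} min(K''(φ), 0) dφ`. -/
def kmin (K : ℝ → ℝ) (ΦF : ℝ) : ℝ :=
  deriv K 0 + ∫ φ in (0 : ℝ)..ΦF, min (deriv (deriv K) φ) 0

/-- `k_max := K'(0) + ∫₀^{Φ_F} max(K''(φ), 0) dφ`. -/
def kmax (K : ℝ → ℝ) (ΦF : ℝ) : ℝ :=
  deriv K 0 + ∫ φ in (0 : ℝ)..ΦF, max (deriv (deriv K) φ) 0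

/-- Assumption (A2) on the initial datum. -/
structure A2 (K : ℝ → ℝ) (ΦF : ℝ) (Qinit : ℝ → ℝ) : Prop where
  reg : ContDiffOn ℝ 1 Qinit (Icc 0 1)
  mono : MonotoneOn Qinit (Icc 0 1)
  init0 : Qinit 0 = 0
  init1 : Qinit 1 = ΦF
  deriv1 : K ΦF < derivWithin Qinit (Icc 0 1) 1
  compat : derivWithin Qinit (Icc 0 1) 1 - derivWithin Qinit (Icc 0 1) 0 = K ΦF - K 0

/-- A classical solution `(Q, N)` of the Q-system on `[0, T)` with initial datum `Qinit`. -/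
structure IsQSol (K : ℝ → ℝ) (ΦF : ℝ) (T : ℝ≥0∞) (Qinit : ℝ → ℝ)
    (Q : ℝ → ℝ → ℝ) (N : ℝ → ℝ) : Prop where
  initReg : ContDiffOn ℝ 1 Qinit (Icc 0 1)
  initMono : MonotoneOn Qinit (Icc 0 1)
  init0 : Qinit 0 = 0
  init1 : Qinit 1 = ΦF
  initDeriv : K ΦF < derivWithin Qinit (Icc 0 1) 1
  reg : ContDiffOn ℝ 1 (Function.uncurry Q) (Ico0 T ×ˢ Icc (0 : ℝ) 1)
  mono : ∀ τ ∈ Ico0 T, MonotoneOn (Q τ) (Icc 0 1)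
  Ncont : ContinuousOn N (Ico0 T)
  Npos : ∀ τ ∈ Ico0 T, 0 < N τ
  pde : ∀ τ ∈ Ico0 T, ∀ η ∈ Ioo (0 : ℝ) 1,
    pdTau Q τ η + pdEta Q τ η = 1 / N τ + K (Q τ η)
  bc : ∀ τ ∈ Ico0 T, Q τ 0 = 0
  Ndef : ∀ τ ∈ Ico0 T, 1 / N τ = pdEta Q τ 1 - K ΦF
  init : ∀ η ∈ Icc (0 : ℝ) 1, Q 0 η = Qinit η
  constraint : ∀ τ ∈ Ico0 T, K ΦF < pdEta Q τ 1

/-- A classical solution `(Q, Ñ)` of the relaxed system on `[0, T)` with initial datum `Qinit`,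
where `Ñ` is unconstrained in sign. -/
structure IsRelaxedSol (K : ℝ → ℝ) (ΦF : ℝ) (T : ℝ≥0∞) (Qinit : ℝ → ℝ)
    (Q : ℝ → ℝ → ℝ) (Ntil : ℝ → ℝ) : Prop where
  initReg : ContDiffOn ℝ 1 Qinit (Icc 0 1)
  init0 : Qinit 0 = 0
  init1 : Qinit 1 = ΦF
  reg : ContDiffOn ℝ 1 (Function.uncurry Q) (Ico0 T ×ˢ Icc (0 : ℝ) 1)
  Ncont : ContinuousOn Ntil (Ico0 T)
  pde : ∀ τ ∈ Ico0 T, ∀ η ∈ Ioo (0 : ℝ) 1,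
    pdTau Q τ η + pdEta Q τ η = Ntil τ + K (Q τ η)
  bc : ∀ τ ∈ Ico0 T, Q τ 0 = 0
  Ndef : ∀ τ ∈ Ico0 T, Ntil τ = pdEta Q τ 1 - K ΦF
  init : ∀ η ∈ Icc (0 : ℝ) 1, Q 0 η = Qinit η

/-- A steady state `(Q*, N*)` of the Q-system. -/
def IsSteadyState (K : ℝ → ℝ) (ΦF : ℝ) (Qs : ℝ → ℝ) (Ns : ℝ) : Prop :=
  ContDiffOn ℝ 1 Qs (Icc 0 1) ∧ 0 < Ns ∧
    (∀ η ∈ Icc (0 : ℝ) 1, derivWithin Qs (Icc 0 1) η = K (Qs η) + 1 / Ns) ∧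
    Qs 0 = 0 ∧ Qs 1 = ΦF

/-- `P₀ f := f - ∫₀¹ f`. -/
def P0 (f : ℝ → ℝ) (η : ℝ) : ℝ := f η - ∫ x in (0 : ℝ)..1, f x

/-- `H_init := Q_init' - K ∘ Q_init` (derivative within `[0,1]`). -/
def Hinit (K : ℝ → ℝ) (Qinit : ℝ → ℝ) (η : ℝ) : ℝ :=
  derivWithin Qinit (Icc 0 1) η - K (Qinit η)

/-!
Write `H(τ, η) = ∂_η Q - K(Q)`; it equals `1 / N(τ)` at both `η = 0` and `η = 1`, and along the
characteristics `η = τ + c` it satisfies `dH/dτ = K'(Q) (H - 1 / N)`. If `K' ≥ k > 0` on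
`[0, Φ_F]`, the spatial minimum `m(τ)` of `H` therefore decreases at rate at least
`k (1 / N - m)`. Since `Q` is nondecreasing in `η`, `m` is bounded below by `-max K`, so the total
decrease of `m` is finite whatever the lifespan.

Gronwall's inequality along characteristics started at `η = 0` bounds `∫ (H - m)` at time `σ + 1`
by a multiple of `m(σ) - m(σ + 1)`. Two profiles with the same end values have `∫ w (H₁ - H₂) = 0`
for a weight `w` between two positive constants, so for every `σ ≥ τ` the integral
`∫ (H(τ) - m(τ))` at the fixed time `τ` is bounded by a multiple of `m(σ) - m(σ + 1)` as well.
Summing over `σ = τ + i` for `i < j` gives `j ∫ (H(τ) - m(τ)) ≤ D` with `D` independent of `j`. If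
solutions exist for arbitrarily long times, `H(τ)` is thus constant in `η`, and the profile at
time `τ` is a steady state.
-/

section Calculus

section MixedPartial

variable {E : Type*} [NormedAddCommGroup E] [NormedSpace ℝ E] {W F G : ℝ → ℝ → E}

lemma norm_double_increment_sub_le {S U : Set ℝ} {c : E} {ε : ℝ} (hS : Convex ℝ S)
    (hU : Convex ℝ U)
    (hW : ∀ s ∈ S, ∀ x ∈ U, HasDerivWithinAt (fun s => W s x) (F s x) S s)
    (hF : ∀ s ∈ S, ∀ x ∈ U, HasDerivWithinAt (F s) (G s x) U x)
    (hG : ∀ s ∈ S, ∀ x ∈ U, ‖G s x - c‖ ≤ ε)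
    {s t x y : ℝ} (hs : s ∈ S) (ht : t ∈ S) (hx : x ∈ U) (hy : y ∈ U) :
    ‖W s x - W s y - (W t x - W t y) - (s - t) • (x - y) • c‖ ≤ ε * ‖x - y‖ * ‖s - t‖ := by
  have F_increment : ∀ r ∈ S, ‖F r x - F r y - (x - y) • c‖ ≤ ε * ‖x - y‖ := fun r hr => by
    have hd : ∀ z ∈ U, HasDerivWithinAt (fun z => F r z - z • c) (G r z - (1 : ℝ) • c) U z :=
      fun z hz => (hF r hr z hz).sub ((hasDerivWithinAt_id z U).smul_const c)
    have hmvt := hU.norm_image_sub_le_of_norm_hasDerivWithin_le hd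
      (fun z hz => by simpa using hG r hr z hz) hy hx
    rwa [sub_sub_sub_comm, ← sub_smul] at hmvt
  have hd : ∀ r ∈ S, HasDerivWithinAt (fun r => W r x - W r y - r • (x - y) • c)
      (F r x - F r y - (1 : ℝ) • (x - y) • c) S r := fun r hr =>
    ((hW r hr x hx).sub (hW r hr y hy)).sub ((hasDerivWithinAt_id r S).smul_const _)
  have hmvt := hS.norm_image_sub_le_of_norm_hasDerivWithin_le hd
    (fun r hr => by simpa using F_increment r hr) ht hs
  rwa [sub_sub_sub_comm, ← sub_smul] at hmvt

lemma hasDerivAt_partial_of_continuousAt_mixed {A : ℝ → E} {a b : ℝ}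
    (hW₁ : ∀ᶠ p in 𝓝 (a, b), HasDerivAt (fun s => W s p.2) (F p.1 p.2) p.1)
    (hW₂ : ∀ᶠ s in 𝓝 a, HasDerivAt (W s) (A s) b)
    (hF : ∀ᶠ p in 𝓝 (a, b), HasDerivAt (F p.1) (G p.1 p.2) p.2)
    (hG : ContinuousAt (Function.uncurry G) (a, b)) :
    HasDerivAt A (G a b) a := by
  refine .of_isLittleO <| Asymptotics.isLittleO_iff.2 fun ε hε => ?_
  have hGε : ∀ᶠ p in 𝓝 (a, b), ‖G p.1 p.2 - G a b‖ ≤ ε := by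
    filter_upwards [hG.eventually (Metric.closedBall_mem_nhds _ hε)] with p hp
    exact mem_closedBall_iff_norm.1 hp
  obtain ⟨δ, hδ, hball⟩ := Metric.eventually_nhds_iff_ball.1 (hW₁.and (hF.and hGε))
  rw [← ball_prod_same] at hball
  filter_upwards [Metric.ball_mem_nhds a hδ, hW₂] with s hs hWs
  have hd : HasDerivAt (fun x => W s x - W a x - (s - a) • x • G a b)
      (A s - A a - (s - a) • (1 : ℝ) • G a b) b :=
    (hWs.sub hW₂.self_of_nhds).sub (((hasDerivAt_id b).smul_const _).const_smul _)
  rw [one_smul] at hd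
  refine hd.le_of_lip' (by positivity) ?_
  filter_upwards [Metric.ball_mem_nhds b hδ] with x hx
  calc ‖W s x - W a x - (s - a) • x • G a b - (W s b - W a b - (s - a) • b • G a b)‖
      = ‖W s x - W s b - (W a x - W a b) - (s - a) • (x - b) • G a b‖ := by
        congr 1; module
    _ ≤ ε * ‖x - b‖ * ‖s - a‖ :=
        norm_double_increment_sub_le (convex_ball a δ) (convex_ball b δ)
          (fun s hs x hx => (hball (s, x) ⟨hs, hx⟩).1.hasDerivWithinAt)
          (fun s hs x hx => (hball (s, x) ⟨hs, hx⟩).2.1.hasDerivWithinAt)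
          (fun s hs x hx => (hball (s, x) ⟨hs, hx⟩).2.2)
          hs (Metric.mem_ball_self hδ) hx (Metric.mem_ball_self hδ)
    _ = ε * ‖s - a‖ * ‖x - b‖ := by ring

end MixedPartial

lemma continuousOn_sInf_image {X Y : Type*} [TopologicalSpace X] [TopologicalSpace Y]
    {f : X → Y → ℝ} {s : Set X} {t : Set Y} (ht : IsCompact t)
    (hf : ContinuousOn (Function.uncurry f) (s ×ˢ t)) :
    ContinuousOn (fun x => sInf (f x '' t)) s := by
  have := isCompact_iff_compactSpace.1 ht
  rw [continuousOn_iff_continuous_domRestrict]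
  have hcont : Continuous fun p : s × t => f p.1 p.2 :=
    hf.comp_continuous (f := fun p : s × t => ((p.1 : X), (p.2 : Y))) (by fun_prop)
      fun p => ⟨p.1.2, p.2.2⟩
  convert isCompact_univ.continuous_sInf (f := fun (x : s) (y : t) => f x y) hcont using 2 with x
  change sInf (f x '' t) = _
  rw [image_univ, image_eq_range]

lemma frequently_slope_lt_of_le_of_hasDerivWithinAt {m f : ℝ → ℝ} {f' x r : ℝ}
    (hle : ∀ᶠ z in 𝓝[>] x, m z ≤ f z) (hx : m x = f x)
    (hf : HasDerivWithinAt f f' (Ici x) x) (hr : f' < r) :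
    ∃ᶠ z in 𝓝[>] x, slope m x z < r := by
  refine ((hf.liminf_right_slope_le hr).and_eventually
    (hle.and self_mem_nhdsWithin)).mono fun z ⟨hslope, hz, hxz⟩ => lt_of_le_of_lt ?_ hslope
  have : 0 < z - x := sub_pos.2 hxz
  rw [slope_def_field, slope_def_field, hx]
  gcongr

lemma image_le_add_integral_of_liminf_slope_right_le {f g : ℝ → ℝ} {a b : ℝ} (hab : a ≤ b)
    (hf : ContinuousOn f (Icc a b)) (hg : ContinuousOn g (Icc a b))
    (hslope : ∀ x ∈ Ico a b, ∀ r, g x < r → ∃ᶠ z in 𝓝[>] x, slope f x z < r) :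
    f b ≤ f a + ∫ t in a..b, g t := by
  refine image_le_of_liminf_slope_right_le_deriv_boundary hf
    (B := fun x => f a + ∫ t in a..x, g t) (by simp) ?_ (fun x hx => ?_) hslope
    (right_mem_Icc.2 hab)
  · have hprim := intervalIntegral.continuousOn_primitive_interval'
      (hg.intervalIntegrable_of_Icc (μ := volume) hab) left_mem_uIcc
    rw [uIcc_of_le hab] at hprim
    exact continuousOn_const.add hprim
  · have hint : IntervalIntegrable g volume a x :=
      (hg.mono (Icc_subset_Icc_right hx.2.le)).intervalIntegrable_of_Icc hx.1
    have hmem : Icc a b ∈ 𝓝[>] x :=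
      mem_of_superset (Ioo_mem_nhdsGT hx.2) fun y hy => ⟨hx.1.trans hy.1.le, hy.2.le⟩
    exact (intervalIntegral.integral_hasDerivWithinAt_right hint
      ⟨Icc a b, hmem, hg.aestronglyMeasurable measurableSet_Icc⟩
      ((hg x ⟨hx.1, hx.2.le⟩).mono_of_mem_nhdsWithin hmem)).const_add _

lemma image_le_exp_mul_of_deriv_right_le_mul {f f' : ℝ → ℝ} {a b L : ℝ} (hab : a ≤ b)
    (hf : ContinuousOn f (Icc a b)) (hf' : ∀ x ∈ Ico a b, HasDerivWithinAt f (f' x) (Ici x) x)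
    (hL : ∀ x ∈ Ico a b, f' x ≤ L * f x) : f b ≤ exp (L * (b - a)) * f a := by
  have hgronwall := le_gronwallBound_of_liminf_deriv_right_le (ε := 0) hf
    (fun x hx _ hr => (hf' x hx).liminf_right_slope_le hr) le_rfl
    (fun x hx => (hL x hx).trans_eq (add_zero _).symm) b (right_mem_Icc.2 hab)
  rwa [gronwallBound_ε0, mul_comm] at hgronwall

lemma eqOn_const_of_forall_nat_mul_integral_le {f : ℝ → ℝ} {a b c D : ℝ} (hab : a < b)
    (hf : ContinuousOn f (Icc a b)) (hc : ∀ x ∈ Icc a b, c ≤ f x)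
    (hD : ∀ j : ℕ, j * ∫ x in a..b, (f x - c) ≤ D) : EqOn f (fun _ => c) (Icc a b) := by
  intro x hx
  by_contra hxc
  have hpos : 0 < ∫ x in a..b, (f x - c) :=
    intervalIntegral.integral_pos hab (hf.sub continuousOn_const)
      (fun y hy => sub_nonneg.2 (hc y ⟨hy.1.le, hy.2⟩))
      ⟨x, hx, sub_pos.2 (lt_of_le_of_ne (hc x hx) (Ne.symm hxc))⟩
  obtain ⟨j, hj⟩ := Archimedean.arch (D + 1) hpos
  rw [nsmul_eq_mul] at hj
  linarith [hD j]

/-- The average slope of `f` between `b` and `a`. Unlike the difference quotient it is continuous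
across the diagonal `a = b` when `f` is `C¹`, so it can serve as the coefficient of the linear
equation satisfied by the difference of two solutions of a nonlinear one. -/
def meanSlope (f : ℝ → ℝ) (a b : ℝ) : ℝ := ∫ t in (0 : ℝ)..1, deriv f (b + t * (a - b))

variable {f : ℝ → ℝ}

lemma meanSlope_mul_sub (hf : ContDiff ℝ 1 f) (a b : ℝ) :
    meanSlope f a b * (a - b) = f a - f b := by
  have hline (t : ℝ) : HasDerivAt (fun t => b + t * (a - b)) (a - b) t := by
    simpa using ((hasDerivAt_id t).mul_const (a - b)).const_add b
  rw [meanSlope, ← intervalIntegral.integral_mul_const,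
    intervalIntegral.integral_eq_sub_of_hasDerivAt (f := fun t => f (b + t * (a - b)))
      (fun t _ => ((hf.differentiable one_ne_zero _).hasDerivAt).comp t (hline t))]
  · simp
  · have := hf.continuous_deriv le_rfl
    exact Continuous.intervalIntegrable (by fun_prop) _ _

lemma continuous_uncurry_meanSlope (hf : ContDiff ℝ 1 f) :
    Continuous (Function.uncurry (meanSlope f)) := by
  have := hf.continuous_deriv le_rfl
  exact intervalIntegral.continuous_parametric_intervalIntegral_of_continuous'
    (f := fun (p : ℝ × ℝ) t => deriv f (p.2 + t * (p.1 - p.2))) (by fun_prop) 0 1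

lemma meanSlope_mem_Icc (hf : ContDiff ℝ 1 f) {s : Set ℝ} (hs : Convex ℝ s) {l u a b : ℝ}
    (hlu : ∀ x ∈ s, deriv f x ∈ Icc l u) (ha : a ∈ s) (hb : b ∈ s) :
    meanSlope f a b ∈ Icc l u := by
  have hmem : ∀ t ∈ Icc (0 : ℝ) 1, deriv f (b + t * (a - b)) ∈ Icc l u := fun t ht =>
    hlu _ (hs.add_smul_sub_mem hb ha ht)
  have := hf.continuous_deriv le_rfl
  have hint : IntervalIntegrable (fun t => deriv f (b + t * (a - b))) volume 0 1 :=
    Continuous.intervalIntegrable (by fun_prop) _ _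
  constructor
  · simpa [meanSlope] using intervalIntegral.integral_mono_on zero_le_one (f := fun _ => l)
      (by simp) hint fun t ht => (hmem t ht).1
  · simpa [meanSlope] using intervalIntegral.integral_mono_on zero_le_one (g := fun _ => u)
      hint (by simp) fun t ht => (hmem t ht).2

-- The weight is the integrating factor `exp (-∫ κ)` of the linear equation for `q`.
lemma exists_weight_integral_mul_eq_zero {q g κ : ℝ → ℝ} {a b L : ℝ} (hab : a ≤ b)
    (hκ : ContinuousOn κ (Icc a b)) (hκL : ∀ x ∈ Icc a b, κ x ∈ Icc 0 L)
    (hg : ContinuousOn g (Icc a b)) (hq : ContinuousOn q (Icc a b))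
    (hq' : ∀ x ∈ Ioo a b, HasDerivAt q (κ x * q x + g x) x) (hqa : q a = 0) (hqb : q b = 0) :
    ∃ w : ℝ → ℝ, ContinuousOn w (Icc a b) ∧
      (∀ x ∈ Icc a b, w x ∈ Icc (exp (-(L * (b - a)))) 1) ∧ ∫ x in a..b, w x * g x = 0 := by
  have hκint {x : ℝ} (hx : x ∈ Icc a b) : IntervalIntegrable κ volume a x :=
    (hκ.mono (Icc_subset_Icc_right hx.2)).intervalIntegrable_of_Icc hx.1
  have hprim : ContinuousOn (fun x => ∫ t in a..x, κ t) (Icc a b) := by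
    simpa [uIcc_of_le hab] using intervalIntegral.continuousOn_primitive_interval'
      (hκint (right_mem_Icc.2 hab)) left_mem_uIcc
  have hw : ContinuousOn (fun x => exp (-∫ t in a..x, κ t)) (Icc a b) := hprim.neg.rexp
  refine ⟨_, hw, fun x hx => ⟨exp_le_exp.2 (neg_le_neg ?_), exp_le_one_iff.2 (neg_nonpos.2 ?_)⟩, ?_⟩
  · calc ∫ t in a..x, κ t ≤ ∫ _ in a..x, L :=
          intervalIntegral.integral_mono_on hx.1 (hκint hx) (by simp)
            fun t ht => (hκL t ⟨ht.1, ht.2.trans hx.2⟩).2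
      _ = L * (x - a) := by simp [mul_comm]
      _ ≤ L * (b - a) := by
          have : 0 ≤ L := (hκL x hx).1.trans (hκL x hx).2
          gcongr
          exact hx.2
  · exact intervalIntegral.integral_nonneg hx.1 fun t ht => (hκL t ⟨ht.1, ht.2.trans hx.2⟩).1
  · refine (intervalIntegral.integral_eq_sub_of_hasDerivAt_of_le hab (hw.mul hq) (fun x hx => ?_)
      ((hw.mul hg).intervalIntegrable_of_Icc hab)).trans (by simp [hqa, hqb])
    have hprim' : HasDerivAt (fun x => ∫ t in a..x, κ t) (κ x) x :=
      intervalIntegral.integral_hasDerivAt_right (hκint ⟨hx.1.le, hx.2.le⟩)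
        ((hκ.mono Ioo_subset_Icc_self).stronglyMeasurableAtFilter isOpen_Ioo x hx)
        (hκ.continuousAt (Icc_mem_nhds hx.1 hx.2))
    exact (hprim'.neg.exp.mul (hq' x hx)).congr_deriv
      (by simp only [Pi.neg_apply, Pi.mul_apply]; ring)

end Calculus

section Domain

variable {T : ℝ≥0∞} {τ b : ℝ}

lemma Ico0_eq_inter (T : ℝ≥0∞) : Ico0 T = Ici 0 ∩ ENNReal.ofReal ⁻¹' Iio T := rfl

lemma isOpen_ofReal_preimage_Iio (T : ℝ≥0∞) : IsOpen (ENNReal.ofReal ⁻¹' Iio T) :=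
  isOpen_Iio.preimage ENNReal.continuous_ofReal

lemma Ico0_mem_nhdsWithin_Ici (hτ : τ ∈ Ico0 T) : Ico0 T ∈ 𝓝[Ici 0] τ :=
  inter_mem self_mem_nhdsWithin
    (mem_nhdsWithin_of_mem_nhds ((isOpen_ofReal_preimage_Iio T).mem_nhds hτ.2))

lemma Ico0_mem_nhds (hτ : τ ∈ Ico0 T) (hpos : 0 < τ) : Ico0 T ∈ 𝓝 τ := by
  simpa [nhdsWithin_eq_nhds.2 (Ici_mem_nhds hpos)] using Ico0_mem_nhdsWithin_Ici hτ

lemma uniqueDiffOn_Ico0_prod_Icc (T : ℝ≥0∞) : UniqueDiffOn ℝ (Ico0 T ×ˢ Icc (0 : ℝ) 1) := by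
  rw [Ico0_eq_inter]
  exact ((uniqueDiffOn_Ici 0).inter (isOpen_ofReal_preimage_Iio T)).prod (uniqueDiffOn_Icc one_pos)

lemma Icc_subset_Ico0 (hb : b ∈ Ico0 T) : Icc 0 b ⊆ Ico0 T :=
  fun _ hx => ⟨hx.1, (ENNReal.ofReal_le_ofReal hx.2).trans_lt hb.2⟩

lemma mem_Ico0_top (hτ : 0 ≤ τ) : τ ∈ Ico0 ⊤ := ⟨hτ, ENNReal.ofReal_lt_top⟩

end Domain

section PartialDerivatives

variable {T : ℝ≥0∞} {Q : ℝ → ℝ → ℝ} {τ η : ℝ}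

lemma hasDerivWithinAt_eta_fderivWithin
    (hQ : ContDiffOn ℝ 1 (Function.uncurry Q) (Ico0 T ×ˢ Icc (0 : ℝ) 1))
    (hτ : τ ∈ Ico0 T) (hη : η ∈ Icc (0 : ℝ) 1) :
    HasDerivWithinAt (Q τ)
      (fderivWithin ℝ (Function.uncurry Q) (Ico0 T ×ˢ Icc 0 1) (τ, η) (0, 1)) (Icc 0 1) η :=
  (hQ.differentiableOn one_ne_zero (τ, η) ⟨hτ, hη⟩).hasFDerivWithinAt.comp_hasDerivWithinAt η
    ((hasDerivWithinAt_const η _ τ).prodMk (hasDerivWithinAt_id η _)) fun _ hx => ⟨hτ, hx⟩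

lemma hasDerivWithinAt_tau_fderivWithin
    (hQ : ContDiffOn ℝ 1 (Function.uncurry Q) (Ico0 T ×ˢ Icc (0 : ℝ) 1))
    (hτ : τ ∈ Ico0 T) (hη : η ∈ Icc (0 : ℝ) 1) :
    HasDerivWithinAt (fun t => Q t η)
      (fderivWithin ℝ (Function.uncurry Q) (Ico0 T ×ˢ Icc 0 1) (τ, η) (1, 0)) (Ici 0) τ :=
  ((hQ.differentiableOn one_ne_zero (τ, η) ⟨hτ, hη⟩).hasFDerivWithinAt.comp_hasDerivWithinAt
    (f := fun t => (t, η)) τ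
    ((hasDerivWithinAt_id τ (Ico0 T)).prodMk (hasDerivWithinAt_const τ _ η))
    fun _ hx => ⟨hx, hη⟩).mono_of_mem_nhdsWithin (Ico0_mem_nhdsWithin_Ici hτ)

lemma pdEta_eq_fderivWithin
    (hQ : ContDiffOn ℝ 1 (Function.uncurry Q) (Ico0 T ×ˢ Icc (0 : ℝ) 1))
    (hτ : τ ∈ Ico0 T) (hη : η ∈ Icc (0 : ℝ) 1) :
    pdEta Q τ η = fderivWithin ℝ (Function.uncurry Q) (Ico0 T ×ˢ Icc 0 1) (τ, η) (0, 1) :=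
  (hasDerivWithinAt_eta_fderivWithin hQ hτ hη).derivWithin (uniqueDiffOn_Icc one_pos η hη)

lemma pdTau_eq_fderivWithin
    (hQ : ContDiffOn ℝ 1 (Function.uncurry Q) (Ico0 T ×ˢ Icc (0 : ℝ) 1))
    (hτ : τ ∈ Ico0 T) (hη : η ∈ Icc (0 : ℝ) 1) :
    pdTau Q τ η = fderivWithin ℝ (Function.uncurry Q) (Ico0 T ×ˢ Icc 0 1) (τ, η) (1, 0) :=
  (hasDerivWithinAt_tau_fderivWithin hQ hτ hη).derivWithin (uniqueDiffOn_Ici 0 τ hτ.1)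

lemma hasDerivWithinAt_pdEta
    (hQ : ContDiffOn ℝ 1 (Function.uncurry Q) (Ico0 T ×ˢ Icc (0 : ℝ) 1))
    (hτ : τ ∈ Ico0 T) (hη : η ∈ Icc (0 : ℝ) 1) :
    HasDerivWithinAt (Q τ) (pdEta Q τ η) (Icc 0 1) η :=
  (hasDerivWithinAt_eta_fderivWithin hQ hτ hη).differentiableWithinAt.hasDerivWithinAt

lemma hasDerivWithinAt_pdTau
    (hQ : ContDiffOn ℝ 1 (Function.uncurry Q) (Ico0 T ×ˢ Icc (0 : ℝ) 1))
    (hτ : τ ∈ Ico0 T) (hη : η ∈ Icc (0 : ℝ) 1) :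
    HasDerivWithinAt (fun t => Q t η) (pdTau Q τ η) (Ici 0) τ :=
  (hasDerivWithinAt_tau_fderivWithin hQ hτ hη).differentiableWithinAt.hasDerivWithinAt

lemma continuousOn_pdEta
    (hQ : ContDiffOn ℝ 1 (Function.uncurry Q) (Ico0 T ×ˢ Icc (0 : ℝ) 1)) :
    ContinuousOn (Function.uncurry (pdEta Q)) (Ico0 T ×ˢ Icc (0 : ℝ) 1) :=
  ((hQ.continuousOn_fderivWithin (uniqueDiffOn_Ico0_prod_Icc T) le_rfl).clm_apply
    continuousOn_const).congr fun _ hp => pdEta_eq_fderivWithin hQ hp.1 hp.2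

lemma continuousOn_pdTau
    (hQ : ContDiffOn ℝ 1 (Function.uncurry Q) (Ico0 T ×ˢ Icc (0 : ℝ) 1)) :
    ContinuousOn (Function.uncurry (pdTau Q)) (Ico0 T ×ˢ Icc (0 : ℝ) 1) :=
  ((hQ.continuousOn_fderivWithin (uniqueDiffOn_Ico0_prod_Icc T) le_rfl).clm_apply
    continuousOn_const).congr fun _ hp => pdTau_eq_fderivWithin hQ hp.1 hp.2

lemma hasDerivAt_along_characteristic {c : ℝ}
    (hQ : ContDiffOn ℝ 1 (Function.uncurry Q) (Ico0 T ×ˢ Icc (0 : ℝ) 1))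
    (hτ : τ ∈ Ico0 T) (hpos : 0 < τ) (hc : τ + c ∈ Ioo (0 : ℝ) 1) :
    HasDerivAt (fun t => Q t (t + c)) (pdTau Q τ (τ + c) + pdEta Q τ (τ + c)) τ := by
  have hη := Ioo_subset_Icc_self hc
  have hnhds : Ico0 T ×ˢ Icc (0 : ℝ) 1 ∈ 𝓝 (τ, τ + c) :=
    prod_mem_nhds (Ico0_mem_nhds hτ hpos) (Icc_mem_nhds hc.1 hc.2)
  have hfd := (hQ.differentiableOn one_ne_zero (τ, τ + c) ⟨hτ, hη⟩).hasFDerivWithinAt.hasFDerivAt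
    hnhds
  have hline : HasDerivAt (fun t => (t, t + c)) ((1 : ℝ), (1 : ℝ)) τ :=
    (hasDerivAt_id τ).prodMk ((hasDerivAt_id τ).add_const c)
  refine (hfd.comp_hasDerivAt τ hline).congr_deriv ?_
  rw [pdTau_eq_fderivWithin hQ hτ hη, pdEta_eq_fderivWithin hQ hτ hη, ← map_add]
  simp

end PartialDerivatives

section QSystem

variable {K : ℝ → ℝ} {ΦF : ℝ} {T : ℝ≥0∞} {Qinit : ℝ → ℝ} {Q : ℝ → ℝ → ℝ} {N : ℝ → ℝ}

lemma continuousOn_Hinit (hK : Continuous K) {q : ℝ → ℝ} (hq : ContDiffOn ℝ 1 q (Icc 0 1)) :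
    ContinuousOn (Hinit K q) (Icc 0 1) :=
  (hq.continuousOn_derivWithin (uniqueDiffOn_Icc one_pos) le_rfl).sub
    (hK.comp_continuousOn hq.continuousOn)

lemma exists_weight_integral_mul_Hinit_sub_eq_zero (hK : ContDiff ℝ 1 K) {S : Set ℝ}
    (hS : Convex ℝ S) {L : ℝ} (hL : ∀ φ ∈ S, deriv K φ ∈ Icc 0 L) {p q : ℝ → ℝ}
    (hp : ContDiffOn ℝ 1 p (Icc 0 1)) (hq : ContDiffOn ℝ 1 q (Icc 0 1))
    (hpS : MapsTo p (Icc 0 1) S) (hqS : MapsTo q (Icc 0 1) S) (h0 : p 0 = q 0) (h1 : p 1 = q 1) :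
    ∃ w : ℝ → ℝ, ContinuousOn w (Icc 0 1) ∧ (∀ η ∈ Icc (0 : ℝ) 1, w η ∈ Icc (exp (-L)) 1) ∧
      ∫ η in (0 : ℝ)..1, w η * (Hinit K p η - Hinit K q η) = 0 := by
  have hderiv {r : ℝ → ℝ} (hr : ContDiffOn ℝ 1 r (Icc 0 1)) {η : ℝ} (hη : η ∈ Ioo (0 : ℝ) 1) :
      HasDerivAt r (derivWithin r (Icc 0 1) η) η :=
    (hr.differentiableOn one_ne_zero η (Ioo_subset_Icc_self hη)).hasDerivWithinAt.hasDerivAt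
      (Icc_mem_nhds hη.1 hη.2)
  have hweight := exists_weight_integral_mul_eq_zero (q := fun η => p η - q η)
    (g := fun η => Hinit K p η - Hinit K q η) (κ := fun η => meanSlope K (p η) (q η))
    (L := L) zero_le_one
    ((continuous_uncurry_meanSlope hK).comp_continuousOn (hp.continuousOn.prodMk hq.continuousOn))
    (fun η hη => meanSlope_mem_Icc hK hS hL (hpS hη) (hqS hη))
    ((continuousOn_Hinit hK.continuous hp).sub (continuousOn_Hinit hK.continuous hq))
    (hp.continuousOn.sub hq.continuousOn)
    (fun η hη => ((hderiv hp hη).sub (hderiv hq hη)).congr_deriv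
      (by rw [meanSlope_mul_sub hK, Hinit, Hinit]; ring))
    (sub_eq_zero.2 h0) (sub_eq_zero.2 h1)
  simpa using hweight

lemma integral_Hinit_sub_le_exp_mul (hK : ContDiff ℝ 1 K) {S : Set ℝ} (hS : Convex ℝ S)
    {L M : ℝ} (hL : ∀ φ ∈ S, deriv K φ ∈ Icc 0 L) {p q : ℝ → ℝ}
    (hp : ContDiffOn ℝ 1 p (Icc 0 1)) (hq : ContDiffOn ℝ 1 q (Icc 0 1))
    (hpS : MapsTo p (Icc 0 1) S) (hqS : MapsTo q (Icc 0 1) S) (h0 : p 0 = q 0) (h1 : p 1 = q 1)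
    (hMp : ∀ η ∈ Icc (0 : ℝ) 1, M ≤ Hinit K p η) (hMq : ∀ η ∈ Icc (0 : ℝ) 1, M ≤ Hinit K q η) :
    ∫ η in (0 : ℝ)..1, (Hinit K p η - M) ≤ exp L * ∫ η in (0 : ℝ)..1, (Hinit K q η - M) := by
  obtain ⟨w, hw, hwL, hzero⟩ :=
    exists_weight_integral_mul_Hinit_sub_eq_zero hK hS hL hp hq hpS hqS h0 h1
  have hHp : ContinuousOn (fun η => Hinit K p η - M) (Icc 0 1) :=
    (continuousOn_Hinit hK.continuous hp).sub continuousOn_const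
  have hHq : ContinuousOn (fun η => Hinit K q η - M) (Icc 0 1) :=
    (continuousOn_Hinit hK.continuous hq).sub continuousOn_const
  have hint {f : ℝ → ℝ} (hf : ContinuousOn f (Icc 0 1)) : IntervalIntegrable f volume 0 1 :=
    hf.intervalIntegrable_of_Icc zero_le_one
  have hweighted : ∫ η in (0 : ℝ)..1, w η * (Hinit K p η - M) =
      ∫ η in (0 : ℝ)..1, w η * (Hinit K q η - M) := by
    rw [← sub_eq_zero, ← intervalIntegral.integral_sub (hint (hw.fun_mul hHp))
      (hint (hw.fun_mul hHq)), ← hzero]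
    congr 1 with η
    ring
  calc ∫ η in (0 : ℝ)..1, (Hinit K p η - M)
      ≤ ∫ η in (0 : ℝ)..1, exp L * (w η * (Hinit K p η - M)) := by
        refine intervalIntegral.integral_mono_on zero_le_one (hint hHp)
          (hint (continuousOn_const.mul (hw.mul hHp))) fun η hη => ?_
        have hexp : 1 ≤ exp L * w η := by
          rw [← div_le_iff₀' (exp_pos L), one_div, ← exp_neg]
          exact (hwL η hη).1
        rw [← mul_assoc]
        exact le_mul_of_one_le_left (sub_nonneg.2 (hMp η hη)) hexp
    _ = exp L * ∫ η in (0 : ℝ)..1, w η * (Hinit K q η - M) := by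
        rw [intervalIntegral.integral_const_mul, hweighted]
    _ ≤ exp L * ∫ η in (0 : ℝ)..1, (Hinit K q η - M) := by
        refine mul_le_mul_of_nonneg_left (intervalIntegral.integral_mono_on zero_le_one
          (hint (hw.mul hHq)) (hint hHq) fun η hη => ?_) (exp_pos L).le
        exact mul_le_of_le_one_left (sub_nonneg.2 (hMq η hη)) (hwL η hη).2

/-- The minimum over `[0, 1]` of the function `Hinit K q` attached to a profile `q`; its evolution
along a solution is the monotone quantity of the argument. It is encoded as an infimum, which is
attained whenever `Hinit K q` is continuous on `[0, 1]`. -/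
def Hmin (K q : ℝ → ℝ) : ℝ := sInf (Hinit K q '' Icc 0 1)

namespace IsQSol

variable {τ η : ℝ}

lemma contDiffOn_profile (s : IsQSol K ΦF T Qinit Q N) (hτ : τ ∈ Ico0 T) :
    ContDiffOn ℝ 1 (Q τ) (Icc 0 1) :=
  s.reg.comp (contDiff_prodMk_right τ).contDiffOn fun _ hη => ⟨hτ, hη⟩

lemma pde_Icc (hK : Continuous K) (s : IsQSol K ΦF T Qinit Q N) (hτ : τ ∈ Ico0 T)
    (hη : η ∈ Icc (0 : ℝ) 1) : pdTau Q τ η + pdEta Q τ η = 1 / N τ + K (Q τ η) := by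
  have hslice : ContinuousOn (fun η => (τ, η)) (Icc (0 : ℝ) 1) := by fun_prop
  have hmaps : MapsTo (fun η => (τ, η)) (Icc (0 : ℝ) 1) (Ico0 T ×ˢ Icc 0 1) :=
    fun _ hx => ⟨hτ, hx⟩
  exact EqOn.of_subset_closure (s.pde τ hτ)
    (((continuousOn_pdTau s.reg).comp hslice hmaps).add
      ((continuousOn_pdEta s.reg).comp hslice hmaps))
    (continuousOn_const.add (hK.comp_continuousOn (s.contDiffOn_profile hτ).continuousOn))
    Ioo_subset_Icc_self (closure_Ioo zero_ne_one).ge hη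

lemma apply_one (hK : ContDiff ℝ 1 K) (s : IsQSol K ΦF T Qinit Q N) (hτ : τ ∈ Ico0 T) :
    Q τ 1 = ΦF := by
  have hsub := Icc_subset_Ico0 hτ
  have hone : (1 : ℝ) ∈ Icc (0 : ℝ) 1 := right_mem_Icc.2 zero_le_one
  have hderiv (t : ℝ) (ht : t ∈ Icc 0 τ) :
      HasDerivWithinAt (fun t => Q t 1 - ΦF) (meanSlope K (Q t 1) ΦF * (Q t 1 - ΦF)) (Ici 0) t := by
    refine ((hasDerivWithinAt_pdTau s.reg (hsub ht) hone).sub_const ΦF).congr_deriv ?_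
    rw [meanSlope_mul_sub hK]
    linarith [s.pde_Icc hK.continuous (hsub ht) hone, s.Ndef t (hsub ht)]
  have hcont : ContinuousOn (fun t => Q t 1) (Icc 0 τ) := fun t ht =>
    (hasDerivWithinAt_pdTau s.reg (hsub ht) hone).continuousWithinAt.mono Icc_subset_Ici_self
  have hslope : ContinuousOn (fun t => meanSlope K (Q t 1) ΦF) (Icc 0 τ) :=
    (continuous_uncurry_meanSlope hK).comp_continuousOn (hcont.prodMk continuousOn_const)
  obtain ⟨B, hB⟩ := isCompact_Icc.exists_bound_of_continuousOn hslope
  have hbound (t : ℝ) (ht : t ∈ Ico 0 τ) :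
      ‖meanSlope K (Q t 1) ΦF * (Q t 1 - ΦF)‖ ≤ B * ‖Q t 1 - ΦF‖ := by
    rw [norm_mul]
    exact mul_le_mul_of_nonneg_right (hB t (Ico_subset_Icc_self ht)) (norm_nonneg _)
  exact sub_eq_zero.1 <| eq_zero_of_abs_deriv_le_mul_abs_self_of_eq_zero_right
    (f := fun t => Q t 1 - ΦF) (hcont.sub continuousOn_const)
    (fun t ht => (hderiv t (Ico_subset_Icc_self ht)).mono (Ici_subset_Ici.2 ht.1))
    (by rw [s.init 1 hone, s.init1, sub_self]) hbound τ (right_mem_Icc.2 hτ.1)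

lemma mem_Icc (hK : ContDiff ℝ 1 K) (s : IsQSol K ΦF T Qinit Q N) (hτ : τ ∈ Ico0 T)
    (hη : η ∈ Icc (0 : ℝ) 1) : Q τ η ∈ Icc 0 ΦF := by
  constructor
  · exact s.bc τ hτ ▸ s.mono τ hτ (left_mem_Icc.2 zero_le_one) hη hη.1
  · exact s.apply_one hK hτ ▸ s.mono τ hτ hη (right_mem_Icc.2 zero_le_one) hη.2

lemma Hinit_one (hK : ContDiff ℝ 1 K) (s : IsQSol K ΦF T Qinit Q N) (hτ : τ ∈ Ico0 T) :
    Hinit K (Q τ) 1 = 1 / N τ := by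
  rw [s.Ndef τ hτ, Hinit, s.apply_one hK hτ]
  rfl

lemma Hinit_zero (hK : Continuous K) (s : IsQSol K ΦF T Qinit Q N) (hτ : τ ∈ Ico0 T) :
    Hinit K (Q τ) 0 = 1 / N τ := by
  have hzero : (0 : ℝ) ∈ Icc (0 : ℝ) 1 := left_mem_Icc.2 zero_le_one
  have hpd : pdTau Q τ 0 = 0 :=
    (EventuallyEq.derivWithin_eq_of_mem (f₁ := fun t => Q t 0) (f := fun _ => (0 : ℝ))
      (mem_of_superset (Ico0_mem_nhdsWithin_Ici hτ) s.bc) hτ.1).trans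
      (congrFun (derivWithin_fun_const ..) τ)
  have hpde := s.pde_Icc hK hτ hzero
  rw [hpd, zero_add] at hpde
  exact sub_eq_of_eq_add hpde

lemma neg_le_Hinit (s : IsQSol K ΦF T Qinit Q N) (hτ : τ ∈ Ico0 T) :
    -K (Q τ η) ≤ Hinit K (Q τ) η := by
  linarith [(s.mono τ hτ).derivWithin_nonneg (x := η), Hinit.eq_1 K (Q τ) η]

lemma continuousOn_uncurry_Hinit (hK : Continuous K) (s : IsQSol K ΦF T Qinit Q N) :
    ContinuousOn (Function.uncurry fun τ => Hinit K (Q τ)) (Ico0 T ×ˢ Icc (0 : ℝ) 1) :=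
  (continuousOn_pdEta s.reg).sub (hK.comp_continuousOn s.reg.continuousOn)

lemma continuousOn_one_div_N (s : IsQSol K ΦF T Qinit Q N) :
    ContinuousOn (fun t => 1 / N t) (Ico0 T) :=
  continuousOn_const.div s.Ncont fun t ht => (s.Npos t ht).ne'

lemma hasDerivAt_profile_characteristic (s : IsQSol K ΦF T Qinit Q N) {c : ℝ} (hτ : τ ∈ Ico0 T)
    (hpos : 0 < τ) (hc : τ + c ∈ Ioo (0 : ℝ) 1) :
    HasDerivAt (fun t => Q t (t + c)) (1 / N τ + K (Q τ (τ + c))) τ :=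
  s.pde τ hτ _ hc ▸ hasDerivAt_along_characteristic s.reg hτ hpos hc

-- `Q` is only `C¹`, so the equation cannot be differentiated in `η` directly: in the variables
-- `(t, x) ↦ Q t (t + x)` it provides one of the two mixed derivatives, and the other follows.
lemma hasDerivAt_pdEta_characteristic (hK : ContDiff ℝ 1 K) (s : IsQSol K ΦF T Qinit Q N)
    {c : ℝ} (hτ : τ ∈ Ico0 T) (hpos : 0 < τ) (hc : τ + c ∈ Ioo (0 : ℝ) 1) :
    HasDerivAt (fun t => pdEta Q t (t + c)) (deriv K (Q τ (τ + c)) * pdEta Q τ (τ + c)) τ := by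
  have hinterior : ∀ᶠ p : ℝ × ℝ in 𝓝 (τ, c),
      p.1 ∈ Ico0 T ∧ 0 < p.1 ∧ p.1 + p.2 ∈ Ioo (0 : ℝ) 1 :=
    (continuousAt_fst.eventually_mem (Ico0_mem_nhds hτ hpos)).and <|
      (continuousAt_fst.eventually_mem (Ioi_mem_nhds hpos)).and <|
        (continuous_fst.add continuous_snd).continuousAt.eventually_mem (Ioo_mem_nhds hc.1 hc.2)
  have heta {t x : ℝ} (ht : t ∈ Ico0 T) (hx : t + x ∈ Ioo (0 : ℝ) 1) :
      HasDerivAt (fun x => Q t (t + x)) (pdEta Q t (t + x)) x :=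
    ((hasDerivWithinAt_pdEta s.reg ht (Ioo_subset_Icc_self hx)).hasDerivAt
      (Icc_mem_nhds hx.1 hx.2)).comp_const_add t x
  have hshear : ContinuousAt (fun p : ℝ × ℝ => (p.1, p.1 + p.2)) (τ, c) := by fun_prop
  have hdom : Ico0 T ×ˢ Icc (0 : ℝ) 1 ∈ 𝓝 (τ, τ + c) :=
    prod_mem_nhds (Ico0_mem_nhds hτ hpos) (Icc_mem_nhds hc.1 hc.2)
  refine hasDerivAt_partial_of_continuousAt_mixed (W := fun t x => Q t (t + x)) (b := c)
    (F := fun t x => 1 / N t + K (Q t (t + x)))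
    (G := fun t x => deriv K (Q t (t + x)) * pdEta Q t (t + x)) ?_ ?_ ?_ ?_
  · filter_upwards [hinterior] with p hp
    exact s.hasDerivAt_profile_characteristic hp.1 hp.2.1 hp.2.2
  · filter_upwards [(ContinuousAt.prodMk continuousAt_id continuousAt_const).eventually hinterior]
      with t ht
    exact heta ht.1 ht.2.2
  · filter_upwards [hinterior] with p hp
    exact ((hK.differentiable one_ne_zero _).hasDerivAt.comp p.2 (heta hp.1 hp.2.2)).const_add _
  · exact (((hK.continuous_deriv le_rfl).continuousAt.comp
      (s.reg.continuousOn.continuousAt hdom)).mul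
      ((continuousOn_pdEta s.reg).continuousAt hdom)).comp (x := (τ, c)) hshear

lemma hasDerivAt_Hinit_characteristic (hK : ContDiff ℝ 1 K) (s : IsQSol K ΦF T Qinit Q N)
    {c : ℝ} (hτ : τ ∈ Ico0 T) (hpos : 0 < τ) (hc : τ + c ∈ Ioo (0 : ℝ) 1) :
    HasDerivAt (fun t => Hinit K (Q t) (t + c))
      (deriv K (Q τ (τ + c)) * (Hinit K (Q τ) (τ + c) - 1 / N τ)) τ := by
  refine ((s.hasDerivAt_pdEta_characteristic hK hτ hpos hc).sub
    ((hK.differentiable one_ne_zero _).hasDerivAt.comp τ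
      (s.hasDerivAt_profile_characteristic hτ hpos hc))).congr_deriv ?_
  rw [Hinit, pdEta]
  ring

lemma continuousOn_Hinit_characteristic (hK : Continuous K) (s : IsQSol K ΦF T Qinit Q N) (c : ℝ) :
    ContinuousOn (fun t => Hinit K (Q t) (t + c)) (Ico0 T ∩ (· + c) ⁻¹' Icc 0 1) :=
  (s.continuousOn_uncurry_Hinit hK).comp (f := fun t => (t, t + c)) (by fun_prop) fun _ ht => ht

lemma hasDerivWithinAt_Hinit_characteristic (hK : ContDiff ℝ 1 K) (s : IsQSol K ΦF T Qinit Q N)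
    {c : ℝ} (hτ : τ ∈ Ico0 T) (hc : τ + c ∈ Ico (0 : ℝ) 1) :
    HasDerivWithinAt (fun t => Hinit K (Q t) (t + c))
      (deriv K (Q τ (τ + c)) * (Hinit K (Q τ) (τ + c) - 1 / N τ)) (Ici τ) τ := by
  set S : Set ℝ := {t | t ∈ Ico0 T ∧ 0 < t ∧ t + c ∈ Ioo (0 : ℝ) 1}
  have hS : S ∈ 𝓝[>] τ := by
    filter_upwards [nhdsWithin_mono τ (Ioi_subset_Ici hτ.1) (Ico0_mem_nhdsWithin_Ici hτ),
      Ioo_mem_nhdsGT (by linarith [hc.2] : τ < 1 - c)] with t ht hτt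
    exact ⟨ht, hτ.1.trans_lt hτt.1, by linarith [hc.1, hτt.1], by linarith [hτt.2]⟩
  have hderiv (t : ℝ) (ht : t ∈ S) := s.hasDerivAt_Hinit_characteristic hK ht.1 ht.2.1 ht.2.2
  have hmem : τ ∈ Ico0 T ∩ (· + c) ⁻¹' Icc 0 1 := ⟨hτ, Ico_subset_Icc_self hc⟩
  have hsub : S ⊆ Ico0 T ∩ (· + c) ⁻¹' Icc 0 1 := fun t ht =>
    ⟨ht.1, Ioo_subset_Icc_self ht.2.2⟩
  have hH := s.continuousOn_Hinit_characteristic hK.continuous c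
  have hQ : ContinuousOn (fun t => Q t (t + c)) (Ico0 T ∩ (· + c) ⁻¹' Icc 0 1) :=
    s.reg.continuousOn.comp (f := fun t => (t, t + c)) (by fun_prop) fun _ ht => ht
  have hH' : ContinuousOn (fun t => deriv K (Q t (t + c)) * (Hinit K (Q t) (t + c) - 1 / N t))
      (Ico0 T ∩ (· + c) ⁻¹' Icc 0 1) :=
    ((hK.continuous_deriv le_rfl).comp_continuousOn hQ).mul
      (hH.sub (s.continuousOn_one_div_N.mono inter_subset_left))
  refine hasDerivWithinAt_Ici_of_tendsto_deriv
    (fun t ht => (hderiv t ht).differentiableAt.differentiableWithinAt)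
    ((hH τ hmem).mono hsub) hS ?_
  refine (((hH' τ hmem).mono hsub).mono_left (nhdsWithin_le_iff.2 hS)).congr' ?_
  filter_upwards [hS] with t ht
  exact (hderiv t ht).deriv.symm

lemma continuousOn_Hinit_profile (hK : Continuous K) (s : IsQSol K ΦF T Qinit Q N)
    (hτ : τ ∈ Ico0 T) : ContinuousOn (Hinit K (Q τ)) (Icc 0 1) :=
  continuousOn_Hinit hK (s.contDiffOn_profile hτ)

lemma continuousOn_Hmin (hK : Continuous K) (s : IsQSol K ΦF T Qinit Q N) :
    ContinuousOn (fun τ => Hmin K (Q τ)) (Ico0 T) :=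
  continuousOn_sInf_image isCompact_Icc (s.continuousOn_uncurry_Hinit hK)

lemma Hmin_le_Hinit (hK : Continuous K) (s : IsQSol K ΦF T Qinit Q N) (hτ : τ ∈ Ico0 T)
    (hη : η ∈ Icc (0 : ℝ) 1) : Hmin K (Q τ) ≤ Hinit K (Q τ) η :=
  (s.continuousOn_Hinit_profile hK hτ).sInf_image_Icc_le hη

lemma Hmin_le_one_div_N (hK : Continuous K) (s : IsQSol K ΦF T Qinit Q N) (hτ : τ ∈ Ico0 T) :
    Hmin K (Q τ) ≤ 1 / N τ :=
  s.Hinit_zero hK hτ ▸ s.Hmin_le_Hinit hK hτ (left_mem_Icc.2 zero_le_one)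

lemma exists_mem_Ico_Hmin_eq (hK : ContDiff ℝ 1 K) (s : IsQSol K ΦF T Qinit Q N)
    (hτ : τ ∈ Ico0 T) : ∃ η ∈ Ico (0 : ℝ) 1, Hmin K (Q τ) = Hinit K (Q τ) η := by
  obtain ⟨η, hη, hmin⟩ := isCompact_Icc.exists_sInf_image_eq (nonempty_Icc.2 zero_le_one)
    (s.continuousOn_Hinit_profile hK.continuous hτ)
  rcases hη.2.lt_or_eq with hlt | rfl
  · exact ⟨η, ⟨hη.1, hlt⟩, hmin⟩
  · exact ⟨0, by simp, hmin.trans ((s.Hinit_one hK hτ).trans (s.Hinit_zero hK.continuous hτ).symm)⟩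

lemma frequently_slope_Hmin_lt (hK : ContDiff ℝ 1 K) (s : IsQSol K ΦF T Qinit Q N) {k r : ℝ}
    (hk : ∀ φ ∈ Icc 0 ΦF, k ≤ deriv K φ) (hτ : τ ∈ Ico0 T)
    (hr : -(k * (1 / N τ - Hmin K (Q τ))) < r) :
    ∃ᶠ t in 𝓝[>] τ, slope (fun t => Hmin K (Q t)) τ t < r := by
  obtain ⟨η, hη, hmin⟩ := s.exists_mem_Ico_Hmin_eq hK hτ
  have hshift : τ + (η - τ) = η := by ring
  have hderiv := s.hasDerivWithinAt_Hinit_characteristic hK hτ (c := η - τ) (by rwa [hshift])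
  rw [hshift, ← hmin] at hderiv
  refine frequently_slope_lt_of_le_of_hasDerivWithinAt ?_ (by rw [hshift, hmin]) hderiv
    (lt_of_le_of_lt ?_ hr)
  · filter_upwards [nhdsWithin_mono τ (Ioi_subset_Ici hτ.1) (Ico0_mem_nhdsWithin_Ici hτ),
      Ioo_mem_nhdsGT (by linarith [hη.2] : τ < τ + (1 - η))] with t ht hτt
    exact s.Hmin_le_Hinit hK.continuous ht ⟨by linarith [hη.1, hτt.1], by linarith [hτt.2]⟩
  · have hslope := hk _ (s.mem_Icc hK hτ (Ico_subset_Icc_self hη))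
    have hgap := sub_nonneg.2 (s.Hmin_le_one_div_N hK.continuous hτ)
    linarith [mul_le_mul_of_nonneg_right hslope hgap]

lemma mul_integral_one_div_N_sub_Hmin_le (hK : ContDiff ℝ 1 K) (s : IsQSol K ΦF T Qinit Q N)
    {k a b : ℝ} (hk : ∀ φ ∈ Icc 0 ΦF, k ≤ deriv K φ) (ha : 0 ≤ a) (hab : a ≤ b)
    (hb : b ∈ Ico0 T) :
    k * ∫ t in a..b, (1 / N t - Hmin K (Q t)) ≤ Hmin K (Q a) - Hmin K (Q b) := by
  have hsub : Icc a b ⊆ Ico0 T := (Icc_subset_Icc_left ha).trans (Icc_subset_Ico0 hb)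
  have hm := (s.continuousOn_Hmin hK.continuous).mono hsub
  have hint := image_le_add_integral_of_liminf_slope_right_le hab hm
    (continuousOn_const.mul ((s.continuousOn_one_div_N.mono hsub).sub hm)).neg
    (fun t ht r hr => s.frequently_slope_Hmin_lt hK hk (hsub (Ico_subset_Icc_self ht)) hr)
  simp only [Pi.neg_apply, Pi.mul_apply, Pi.sub_apply, intervalIntegral.integral_neg,
    intervalIntegral.integral_const_mul] at hint
  linarith

lemma antitoneOn_Hmin (hK : ContDiff ℝ 1 K) (s : IsQSol K ΦF T Qinit Q N)
    (hK' : ∀ φ ∈ Icc 0 ΦF, 0 ≤ deriv K φ) : AntitoneOn (fun τ => Hmin K (Q τ)) (Ico0 T) := by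
  intro a ha b hb hab
  simpa using s.mul_integral_one_div_N_sub_Hmin_le hK hK' ha.1 hab hb

lemma neg_le_Hmin (hK : ContDiff ℝ 1 K) (s : IsQSol K ΦF T Qinit Q N) {C : ℝ}
    (hC : ∀ φ ∈ Icc 0 ΦF, K φ ≤ C) (hτ : τ ∈ Ico0 T) : -C ≤ Hmin K (Q τ) := by
  obtain ⟨η, hη, hmin⟩ := s.exists_mem_Ico_Hmin_eq hK hτ
  rw [hmin]
  exact (neg_le_neg (hC _ (s.mem_Icc hK hτ (Ico_subset_Icc_self hη)))).trans (s.neg_le_Hinit hτ)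

lemma Hinit_sub_Hmin_le_exp_mul (hK : ContDiff ℝ 1 K) (s : IsQSol K ΦF T Qinit Q N) {L : ℝ}
    (hL : ∀ φ ∈ Icc 0 ΦF, deriv K φ ∈ Icc 0 L) (hτ : τ ∈ Ico0 T) (hη : η ∈ Icc (0 : ℝ) 1)
    (hητ : η ≤ τ) :
    Hinit K (Q τ) η - Hmin K (Q τ) ≤ exp (L * η) * (1 / N (τ - η) - Hmin K (Q τ)) := by
  have hsub : Icc (τ - η) τ ⊆ Ico0 T ∩ (· + (η - τ)) ⁻¹' Icc 0 1 := fun t ht =>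
    ⟨Icc_subset_Ico0 hτ ⟨by linarith [ht.1], ht.2⟩, by linarith [ht.1], by linarith [ht.2, hη.2]⟩
  have hcont : ContinuousOn (fun t => Hinit K (Q t) (t + (η - τ)) - Hmin K (Q τ))
      (Icc (τ - η) τ) :=
    ((s.continuousOn_Hinit_characteristic hK.continuous _).mono hsub).sub continuousOn_const
  have hbound (t : ℝ) (ht : t ∈ Ico (τ - η) τ) :
      deriv K (Q t (t + (η - τ))) * (Hinit K (Q t) (t + (η - τ)) - 1 / N t) ≤
        L * (Hinit K (Q t) (t + (η - τ)) - Hmin K (Q τ)) := by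
    obtain ⟨ht0, htc⟩ := hsub (Ico_subset_Icc_self ht)
    obtain ⟨hK0, hKL⟩ := hL _ (s.mem_Icc hK ht0 htc)
    have hanti : Hmin K (Q τ) ≤ Hmin K (Q t) :=
      s.antitoneOn_Hmin hK (fun φ hφ => (hL φ hφ).1) ht0 hτ ht.2.le
    have hN := hanti.trans (s.Hmin_le_one_div_N hK.continuous ht0)
    have hH := hanti.trans (s.Hmin_le_Hinit hK.continuous ht0 htc)
    exact (mul_le_mul_of_nonneg_left (sub_le_sub_left hN _) hK0).trans
      (mul_le_mul_of_nonneg_right hKL (sub_nonneg.2 hH))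
  have hgronwall := image_le_exp_mul_of_deriv_right_le_mul (sub_le_self τ hη.1) hcont
    (fun t ht => (s.hasDerivWithinAt_Hinit_characteristic hK
      (hsub (Ico_subset_Icc_self ht)).1
      ⟨(hsub (Ico_subset_Icc_self ht)).2.1, by linarith [ht.2, hη.2]⟩).sub_const _) hbound
  have hstart := s.Hinit_zero hK.continuous
    (hsub (left_mem_Icc.2 (sub_le_self τ hη.1))).1
  simpa [hstart] using hgronwall

lemma integral_one_div_N_sub_Hmin_le (hK : ContDiff ℝ 1 K) (s : IsQSol K ΦF T Qinit Q N)
    {k a b : ℝ} (hk : 0 < k) (hK' : ∀ φ ∈ Icc 0 ΦF, k ≤ deriv K φ) (ha : 0 ≤ a) (hab : a ≤ b)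
    (hb : b ∈ Ico0 T) :
    ∫ t in a..b, (1 / N t - Hmin K (Q b)) ≤
      (1 / k + (b - a)) * (Hmin K (Q a) - Hmin K (Q b)) := by
  have hsub : Icc a b ⊆ Ico0 T := (Icc_subset_Icc_left ha).trans (Icc_subset_Ico0 hb)
  have hanti := s.antitoneOn_Hmin hK fun φ hφ => hk.le.trans (hK' φ hφ)
  have hN := s.continuousOn_one_div_N.mono hsub
  have hgap : IntervalIntegrable (fun t => 1 / N t - Hmin K (Q t)) volume a b :=
    (hN.sub ((s.continuousOn_Hmin hK.continuous).mono hsub)).intervalIntegrable_of_Icc hab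
  calc ∫ t in a..b, (1 / N t - Hmin K (Q b))
      ≤ ∫ t in a..b, ((1 / N t - Hmin K (Q t)) + (Hmin K (Q a) - Hmin K (Q b))) := by
        refine intervalIntegral.integral_mono_on hab
          ((hN.sub continuousOn_const).intervalIntegrable_of_Icc hab)
          (hgap.add (by simp)) fun t ht => ?_
        have hmono : Hmin K (Q t) ≤ Hmin K (Q a) :=
          hanti (hsub (left_mem_Icc.2 hab)) (hsub ht) ht.1
        linarith
    _ = (∫ t in a..b, (1 / N t - Hmin K (Q t))) +
          (b - a) * (Hmin K (Q a) - Hmin K (Q b)) := by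
        rw [intervalIntegral.integral_add hgap (by simp), intervalIntegral.integral_const,
          smul_eq_mul]
    _ ≤ 1 / k * (Hmin K (Q a) - Hmin K (Q b)) + (b - a) * (Hmin K (Q a) - Hmin K (Q b)) := by
        gcongr
        rw [one_div_mul_eq_div, le_div_iff₀' hk]
        exact s.mul_integral_one_div_N_sub_Hmin_le hK hK' ha hab hb
    _ = _ := by ring

lemma integral_Hinit_sub_Hmin_le (hK : ContDiff ℝ 1 K) (s : IsQSol K ΦF T Qinit Q N) {k L : ℝ}
    (hk : 0 < k) (hkL : ∀ φ ∈ Icc 0 ΦF, deriv K φ ∈ Icc k L) (hτ : 0 ≤ τ) (hT : τ + 1 ∈ Ico0 T) :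
    ∫ η in (0 : ℝ)..1, (Hinit K (Q (τ + 1)) η - Hmin K (Q (τ + 1))) ≤
      exp L * (1 / k + 1) * (Hmin K (Q τ) - Hmin K (Q (τ + 1))) := by
  have hL : ∀ φ ∈ Icc 0 ΦF, deriv K φ ∈ Icc 0 L :=
    fun φ hφ => Icc_subset_Icc_left hk.le (hkL φ hφ)
  have hmem {η : ℝ} (hη : η ∈ Icc (0 : ℝ) 1) : τ + 1 - η ∈ Ico0 T :=
    Icc_subset_Ico0 hT ⟨by linarith [hη.2], by linarith [hη.1]⟩
  have hL0 : 0 ≤ L :=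
    nonempty_Icc.1 ⟨_, hL _ (s.mem_Icc hK hT (left_mem_Icc.2 zero_le_one))⟩
  have hgap {η : ℝ} (hη : η ∈ Icc (0 : ℝ) 1) : Hmin K (Q (τ + 1)) ≤ 1 / N (τ + 1 - η) :=
    (s.antitoneOn_Hmin hK (fun φ hφ => (hL φ hφ).1) (hmem hη) hT (sub_le_self _ hη.1)).trans
      (s.Hmin_le_one_div_N hK.continuous (hmem hη))
  calc ∫ η in (0 : ℝ)..1, (Hinit K (Q (τ + 1)) η - Hmin K (Q (τ + 1)))
      ≤ ∫ η in (0 : ℝ)..1, exp L * (1 / N (τ + 1 - η) - Hmin K (Q (τ + 1))) := by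
        refine intervalIntegral.integral_mono_on zero_le_one
          (((s.continuousOn_Hinit_profile hK.continuous hT).sub
            continuousOn_const).intervalIntegrable_of_Icc zero_le_one)
          ((continuousOn_const.mul ((s.continuousOn_one_div_N.comp (by fun_prop)
            fun η hη => hmem hη).sub continuousOn_const)).intervalIntegrable_of_Icc zero_le_one)
          fun η hη => (s.Hinit_sub_Hmin_le_exp_mul hK hL hT hη (by linarith [hη.2])).trans ?_
        exact mul_le_mul_of_nonneg_right
          (exp_le_exp.2 (mul_le_of_le_one_right hL0 hη.2)) (sub_nonneg.2 (hgap hη))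
    _ = exp L * ∫ t in τ..τ + 1, (1 / N t - Hmin K (Q (τ + 1))) := by
        rw [intervalIntegral.integral_const_mul, intervalIntegral.integral_comp_sub_left
          (fun t => 1 / N t - Hmin K (Q (τ + 1))) (τ + 1), add_sub_cancel_right, sub_zero]
    _ ≤ exp L * ((1 / k + (τ + 1 - τ)) * (Hmin K (Q τ) - Hmin K (Q (τ + 1)))) := by
        gcongr
        exact s.integral_one_div_N_sub_Hmin_le hK hk (fun φ hφ => (hkL φ hφ).1) hτ
          (by linarith) hT
    _ = _ := by ring

lemma integral_Hinit_sub_Hmin_le_of_unit_step (hK : ContDiff ℝ 1 K)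
    (s : IsQSol K ΦF T Qinit Q N) {k L σ : ℝ} (hk : 0 < k)
    (hkL : ∀ φ ∈ Icc 0 ΦF, deriv K φ ∈ Icc k L) (hτ : 0 ≤ τ) (hτσ : τ ≤ σ)
    (hσ : σ + 1 ∈ Ico0 T) :
    ∫ η in (0 : ℝ)..1, (Hinit K (Q τ) η - Hmin K (Q τ)) ≤
      exp L * (exp L * (1 / k + 1) * (Hmin K (Q σ) - Hmin K (Q (σ + 1)))) := by
  have hL : ∀ φ ∈ Icc 0 ΦF, deriv K φ ∈ Icc 0 L :=
    fun φ hφ => Icc_subset_Icc_left hk.le (hkL φ hφ)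
  have hτT : τ ∈ Ico0 T := Icc_subset_Ico0 hσ ⟨hτ, by linarith⟩
  have hanti : Hmin K (Q (σ + 1)) ≤ Hmin K (Q τ) :=
    s.antitoneOn_Hmin hK (fun φ hφ => (hL φ hφ).1) hτT hσ (by linarith)
  have hH := s.continuousOn_Hinit_profile hK.continuous hτT
  calc ∫ η in (0 : ℝ)..1, (Hinit K (Q τ) η - Hmin K (Q τ))
      ≤ ∫ η in (0 : ℝ)..1, (Hinit K (Q τ) η - Hmin K (Q (σ + 1))) :=
        intervalIntegral.integral_mono_on zero_le_one
          ((hH.sub continuousOn_const).intervalIntegrable_of_Icc zero_le_one)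
          ((hH.sub continuousOn_const).intervalIntegrable_of_Icc zero_le_one)
          fun _ _ => sub_le_sub_left hanti _
    _ ≤ exp L * ∫ η in (0 : ℝ)..1, (Hinit K (Q (σ + 1)) η - Hmin K (Q (σ + 1))) :=
        integral_Hinit_sub_le_exp_mul hK (convex_Icc 0 ΦF) hL (s.contDiffOn_profile hτT)
          (s.contDiffOn_profile hσ) (fun _ hη => s.mem_Icc hK hτT hη)
          (fun _ hη => s.mem_Icc hK hσ hη) (by rw [s.bc τ hτT, s.bc _ hσ])
          (by rw [s.apply_one hK hτT, s.apply_one hK hσ])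
          (fun _ hη => hanti.trans (s.Hmin_le_Hinit hK.continuous hτT hη))
          (fun _ hη => s.Hmin_le_Hinit hK.continuous hσ hη)
    _ ≤ _ := mul_le_mul_of_nonneg_left
        (s.integral_Hinit_sub_Hmin_le hK hk hkL (hτ.trans hτσ) hσ) (exp_pos L).le

lemma nat_mul_integral_Hinit_sub_Hmin_le (hK : ContDiff ℝ 1 K) (s : IsQSol K ΦF T Qinit Q N)
    {k L C : ℝ} (hk : 0 < k) (hkL : ∀ φ ∈ Icc 0 ΦF, deriv K φ ∈ Icc k L)
    (hC : ∀ φ ∈ Icc 0 ΦF, K φ ≤ C) (hτ : 0 ≤ τ) {j : ℕ} (hT : τ + j ∈ Ico0 T) :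
    j * ∫ η in (0 : ℝ)..1, (Hinit K (Q τ) η - Hmin K (Q τ)) ≤
      exp L * (exp L * (1 / k + 1) * (Hmin K (Q τ) + C)) := by
  have hstep (i : ℕ) (hi : i ∈ Finset.range j) :
      ∫ η in (0 : ℝ)..1, (Hinit K (Q τ) η - Hmin K (Q τ)) ≤
        exp L * (exp L * (1 / k + 1) *
          (Hmin K (Q (τ + i)) - Hmin K (Q (τ + (i + 1 : ℕ))))) := by
    have hij : ((i + 1 : ℕ) : ℝ) ≤ j := Nat.cast_le.2 (Finset.mem_range.1 hi)
    push_cast at hij ⊢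
    rw [← add_assoc]
    exact s.integral_Hinit_sub_Hmin_le_of_unit_step hK hk hkL hτ
      (le_add_of_nonneg_right i.cast_nonneg)
      (Icc_subset_Ico0 hT ⟨by positivity, by linarith⟩)
  calc j * ∫ η in (0 : ℝ)..1, (Hinit K (Q τ) η - Hmin K (Q τ))
      = ∑ _i ∈ Finset.range j, ∫ η in (0 : ℝ)..1, (Hinit K (Q τ) η - Hmin K (Q τ)) := by
        rw [Finset.sum_const, Finset.card_range, nsmul_eq_mul]
    _ ≤ ∑ i ∈ Finset.range j, exp L * (exp L * (1 / k + 1) *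
          (Hmin K (Q (τ + i)) - Hmin K (Q (τ + (i + 1 : ℕ))))) := Finset.sum_le_sum hstep
    _ = exp L * (exp L * (1 / k + 1) * (Hmin K (Q τ) - Hmin K (Q (τ + j)))) := by
        rw [← Finset.mul_sum, ← Finset.mul_sum,
          Finset.sum_range_sub' (fun i : ℕ => Hmin K (Q (τ + i))), Nat.cast_zero, add_zero]
    _ ≤ _ := by
        gcongr
        linarith [s.neg_le_Hmin hK hC hT]

end IsQSol

lemma Hinit_eqOn_congr {p q : ℝ → ℝ} (h : EqOn p q (Icc 0 1)) :
    EqOn (Hinit K p) (Hinit K q) (Icc 0 1) := fun η hη => by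
  rw [Hinit, Hinit, derivWithin_congr h (h hη), h hη]

lemma Hmin_congr {p q : ℝ → ℝ} (h : EqOn p q (Icc 0 1)) : Hmin K p = Hmin K q := by
  rw [Hmin, Hmin, (Hinit_eqOn_congr h).image_eq]

lemma eqOn_Hinit_Hmin_of_forall_nat_exists_isQSol (hK : ContDiff ℝ 1 K)
    (hK' : ∀ φ ∈ Icc 0 ΦF, 0 < deriv K φ) {q : ℝ → ℝ} {τ : ℝ} (hτ : 0 ≤ τ)
    (hq : ∀ j : ℕ, ∃ T Qinit Q N, IsQSol K ΦF T Qinit Q N ∧ τ + j ∈ Ico0 T ∧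
      EqOn (Q τ) q (Icc 0 1)) :
    EqOn (Hinit K q) (fun _ => Hmin K q) (Icc 0 1) := by
  have hK'c : ContinuousOn (deriv K) (Icc 0 ΦF) := (hK.continuous_deriv le_rfl).continuousOn
  obtain ⟨k, hk, hkle⟩ := isCompact_Icc.exists_forall_le' hK'c hK'
  obtain ⟨L, hL⟩ := isCompact_Icc.bddAbove_image hK'c
  obtain ⟨C, hC⟩ := isCompact_Icc.bddAbove_image (hK.continuous.continuousOn (s := Icc 0 ΦF))
  rw [mem_upperBounds, forall_mem_image] at hL hC
  obtain ⟨T, Qinit, Q, N, s, hT, hQ⟩ := hq 0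
  have hτT : τ ∈ Ico0 T := by simpa using hT
  have hH := Hinit_eqOn_congr (K := K) hQ
  refine eqOn_const_of_forall_nat_mul_integral_le one_pos
    ((s.continuousOn_Hinit_profile hK.continuous hτT).congr hH.symm)
    (D := exp L * (exp L * (1 / k + 1) * (Hmin K q + C)))
    (fun η hη => ?_) fun j => ?_
  · rw [← Hmin_congr hQ, ← hH hη]
    exact s.Hmin_le_Hinit hK.continuous hτT hη
  · obtain ⟨T, Qinit, Q, N, s, hT, hQ⟩ := hq j
    have hbound := s.nat_mul_integral_Hinit_sub_Hmin_le hK hk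
      (fun φ hφ => ⟨hkle φ hφ, hL hφ⟩) (fun φ hφ => hC hφ) hτ hT
    rw [Hmin_congr hQ] at hbound
    rwa [← intervalIntegral.integral_congr fun η hη =>
      congrArg (· - Hmin K q) (Hinit_eqOn_congr hQ (uIcc_of_le (zero_le_one' ℝ) ▸ hη))]

namespace IsQSol

lemma apply_eq_apply_zero_of_top (hK : ContDiff ℝ 1 K) (hK' : ∀ φ ∈ Icc 0 ΦF, 0 < deriv K φ)
    (s : IsQSol K ΦF ⊤ Qinit Q N) {τ η : ℝ} (hτ : 0 ≤ τ) (hη : η ∈ Icc (0 : ℝ) 1) :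
    Q τ η = Q 0 η := by
  have hone : (1 : ℝ) ∈ Icc (0 : ℝ) 1 := right_mem_Icc.2 zero_le_one
  have hderiv (t : ℝ) (ht : 0 ≤ t) : HasDerivWithinAt (fun t => Q t η) 0 (Ici 0) t := by
    have hflat := eqOn_Hinit_Hmin_of_forall_nat_exists_isQSol hK hK' ht fun j =>
      ⟨⊤, Qinit, Q, N, s, mem_Ico0_top (by positivity), eqOn_refl _ _⟩
    have hH : pdEta Q t η - K (Q t η) = 1 / N t :=
      (hflat hη).trans ((hflat hone).symm.trans (s.Hinit_one hK (mem_Ico0_top ht)))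
    refine (hasDerivWithinAt_pdTau s.reg (mem_Ico0_top ht) hη).congr_deriv ?_
    linarith [s.pde_Icc hK.continuous (mem_Ico0_top ht) hη]
  exact constant_of_has_deriv_right_zero (f := fun t => Q t η)
    (fun t ht => (hderiv t ht.1).continuousWithinAt.mono Icc_subset_Ici_self)
    (fun t ht => (hderiv t ht.1).mono (Ici_subset_Ici.2 ht.1)) τ (right_mem_Icc.2 hτ)

lemma isSteadyState_of_eqOn_Hinit_const (s : IsQSol K ΦF T Qinit Q N) {c : ℝ}
    (hc : EqOn (Hinit K Qinit) (fun _ => c) (Icc 0 1)) : IsSteadyState K ΦF Qinit (1 / c) := by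
  have hpos : 0 < c := by
    have hone : Hinit K Qinit 1 = c := hc (right_mem_Icc.2 zero_le_one)
    rw [← hone, Hinit, s.init1]
    exact sub_pos.2 s.initDeriv
  refine ⟨s.initReg, one_div_pos.2 hpos, fun η hη => ?_, s.init0, s.init1⟩
  rw [one_div_one_div]
  exact eq_add_of_sub_eq' (hc hη)

end IsQSol

lemma kmin_le_deriv (hK : ContDiff ℝ 2 K) {φ : ℝ} (hφ : φ ∈ Icc 0 ΦF) :
    kmin K ΦF ≤ deriv K φ := by
  have hK' : ContDiff ℝ 1 (deriv K) := hK.deriv'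
  have hK'' : Continuous (deriv (deriv K)) := hK'.continuous_deriv le_rfl
  have hmin : Continuous fun φ => min (deriv (deriv K) φ) 0 := hK''.min continuous_const
  have hleft : ∫ x in (0 : ℝ)..φ, min (deriv (deriv K) x) 0 ≤ deriv K φ - deriv K 0 := by
    rw [← intervalIntegral.integral_deriv_eq_sub
      (fun x _ => hK'.differentiable one_ne_zero x) (hK''.intervalIntegrable _ _)]
    exact intervalIntegral.integral_mono_on hφ.1 (hmin.intervalIntegrable _ _)
      (hK''.intervalIntegrable _ _) fun _ _ => min_le_left _ _
  have hright : ∫ x in φ..ΦF, min (deriv (deriv K) x) 0 ≤ 0 := by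
    simpa using intervalIntegral.integral_mono_on hφ.2 (hmin.intervalIntegrable _ _)
      (intervalIntegrable_const (c := (0 : ℝ))) fun _ _ => min_le_right _ _
  rw [kmin, ← intervalIntegral.integral_add_adjacent_intervals
    (hmin.intervalIntegrable 0 φ) (hmin.intervalIntegrable φ ΦF)]
  linarith

end QSystem

theorem stmt16_general (ΦF : ℝ) (K : ℝ → ℝ) (hK : ContDiff ℝ 1 K)
    (hK' : ∀ φ ∈ Icc 0 ΦF, 0 < deriv K φ) :
    (∀ (Qinit : ℝ → ℝ) (Q : ℝ → ℝ → ℝ) (N : ℝ → ℝ),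
      IsQSol K ΦF ⊤ Qinit Q N →
      ∀ τ : ℝ, 0 ≤ τ → ∀ η ∈ Icc (0 : ℝ) 1, Q τ η = Q 0 η) ∧
    (∀ Qinit : ℝ → ℝ,
      (¬ ∃ (Qs : ℝ → ℝ) (Ns : ℝ), IsSteadyState K ΦF Qs Ns ∧
        ∀ η ∈ Icc (0 : ℝ) 1, Qinit η = Qs η) →
      sSup {T : ℝ≥0∞ | ∃ (Q : ℝ → ℝ → ℝ) (N : ℝ → ℝ), IsQSol K ΦF T Qinit Q N} < ⊤) := by
  refine ⟨fun Qinit Q N s τ hτ η hη => s.apply_eq_apply_zero_of_top hK hK' hτ hη,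
    fun Qinit hsteady => lt_top_iff_ne_top.2 fun htop => hsteady ?_⟩
  have hlong (j : ℕ) : ∃ T Qi Q N, IsQSol K ΦF T Qi Q N ∧ 0 + (j : ℝ) ∈ Ico0 T ∧
      EqOn (Q 0) Qinit (Icc 0 1) := by
    obtain ⟨T, ⟨Q, N, s⟩, hT⟩ := sSup_eq_top.1 htop _ (ENNReal.ofReal_lt_top (r := 0 + j))
    exact ⟨T, Qinit, Q, N, s, ⟨by positivity, hT⟩, s.init⟩
  obtain ⟨T, ⟨Q, N, s⟩, -⟩ := sSup_eq_top.1 htop 0 ENNReal.zero_lt_top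
  have hflat := eqOn_Hinit_Hmin_of_forall_nat_exists_isQSol hK hK' le_rfl hlong
  exact ⟨Qinit, _, s.isSteadyState_of_eqOn_Hinit_const hflat, fun _ _ => rfl⟩

/-- Theorem 6.1: when `k_min > 0`, every global classical solution is stationary; hence every
solution whose initial datum is not a steady-state profile has finite maximal existence time. -/
theorem stmt16 (ΦF : ℝ) (hΦF : 0 < ΦF) (K : ℝ → ℝ) (hK : KAssump K ΦF)
    (hkmin : 0 < kmin K ΦF) :
    (∀ (Qinit : ℝ → ℝ) (Q : ℝ → ℝ → ℝ) (N : ℝ → ℝ),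
      IsQSol K ΦF ⊤ Qinit Q N →
      ∀ τ : ℝ, 0 ≤ τ → ∀ η ∈ Icc (0 : ℝ) 1, Q τ η = Q 0 η) ∧
    (∀ Qinit : ℝ → ℝ,
      (¬ ∃ (Qs : ℝ → ℝ) (Ns : ℝ), IsSteadyState K ΦF Qs Ns ∧
        ∀ η ∈ Icc (0 : ℝ) 1, Qinit η = Qs η) →
      sSup {T : ℝ≥0∞ | ∃ (Q : ℝ → ℝ → ℝ) (N : ℝ → ℝ), IsQSol K ΦF T Qinit Q N} < ⊤) := by
  exact stmt16_general ΦF K (hK.smooth.of_le one_le_two) fun _ hφ =>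
    hkmin.trans_le (kmin_le_deriv hK.smooth hφ)
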